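/- Let Γ be a connected simple graph on a vertex type X, let Y ⊆ X be such that the induced subgraph Γ[Y] is connected, and let A, B ∈ ℕ. Suppose r is an (A,B)-quasi-retract of Γ onto Y, i.e. r assigns to each vertex x ∈ X a nonempty subset r(x) ⊆ Y such that: (i) the diameter of r(x) with respect to d_{Γ[Y]} is at most A for every x ∈ X; (ii) whenever x = x' or x and x' are adjacent in Γ, there exist p ∈ r(x) and q ∈ r(x') with d_{Γ[Y]}(p,q) ≤ B; and (iii) r(y) = {y} for every y ∈ Y. Then the inclusion of Γ[Y] into Γ is a quasi-isometric embedding with multiplicative constant 2A+B: for all y, y' ∈ Y, d_Γ(y,y') ≤ d_{Γ[Y]}(y,y') ≤ (2A+B) · d_Γ(y,y'). -/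

import Mathlib

/-! A walk of length `n` from `u` to `v` in `Γ` meets `n + 1` of the sets `r x`. Crossing each of
them costs at most `A` and passing from one to the next at most `B`, so points of `r u` and `r v`
lie at distance at most `(A + B) * n + A`. Distinct vertices of `Y` have `n ≥ 1`, and then the last
`A` is absorbed by `A * n`. -/

/-- A coarsely Lipschitz multivalued map `r` from the vertices of `Γ` to those of `Δ`: conditions
(i) and (ii), the latter for adjacent vertices, of an `(A, B)`-quasi-retract. The target is a graph
in its own right, so that it need not be an induced subgraph of `Γ`. -/
structure IsCoarseLipschitz {X W : Type*} (Γ : SimpleGraph X) (Δ : SimpleGraph W) (A B : ℕ)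
    (r : X → Set W) : Prop where
  dist_le_of_mem : ∀ x, ∀ p ∈ r x, ∀ q ∈ r x, Δ.dist p q ≤ A
  exists_dist_le_of_adj : ∀ x x', Γ.Adj x x' → ∃ p ∈ r x, ∃ q ∈ r x', Δ.dist p q ≤ B

section

variable {X W : Type*} {Γ : SimpleGraph X} {Δ : SimpleGraph W} {A B : ℕ} {r : X → Set W}

theorem dist_hom_apply_le (f : Δ →g Γ) {y y' : W} (h : Δ.Reachable y y') :
    Γ.dist (f y) (f y') ≤ Δ.dist y y' := by
  obtain ⟨w, hw⟩ := h.exists_walk_length_eq_dist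
  calc
    Γ.dist (f y) (f y') ≤ (w.map f).length := SimpleGraph.dist_le _
    _ = Δ.dist y y' := by rw [SimpleGraph.Walk.length_map, hw]

namespace IsCoarseLipschitz

theorem dist_le_of_walk (hr : IsCoarseLipschitz Γ Δ A B r) (hΔ : Δ.Connected) {u v : X}
    (w : Γ.Walk u v) {p q : W} (hp : p ∈ r u) (hq : q ∈ r v) :
    Δ.dist p q ≤ (A + B) * w.length + A := by
  induction w generalizing p with
  | nil => simpa using hr.dist_le_of_mem _ p hp q hq
  | cons hadj w ih =>
    obtain ⟨a, ha, b, hb, hab⟩ := hr.exists_dist_le_of_adj _ _ hadj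
    calc
      Δ.dist p q ≤ Δ.dist p a + Δ.dist a q := hΔ.dist_triangle
      _ ≤ Δ.dist p a + (Δ.dist a b + Δ.dist b q) := by gcongr; exact hΔ.dist_triangle
      _ ≤ A + (B + ((A + B) * w.length + A)) := by
        gcongr
        · exact hr.dist_le_of_mem _ p hp a ha
        · exact ih hb hq
      _ = (A + B) * (w.cons hadj).length + A := by rw [SimpleGraph.Walk.length_cons]; ring

theorem dist_le (hr : IsCoarseLipschitz Γ Δ A B r) (hΔ : Δ.Connected) {u v : X}
    (huv : Γ.Reachable u v) {p q : W} (hp : p ∈ r u) (hq : q ∈ r v) :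
    Δ.dist p q ≤ (A + B) * Γ.dist u v + A := by
  obtain ⟨w, hw⟩ := huv.exists_walk_length_eq_dist
  exact hw ▸ hr.dist_le_of_walk hΔ w hp hq

theorem dist_le_mul_dist (hr : IsCoarseLipschitz Γ Δ A B r) (hΔ : Δ.Connected) {u v : X}
    (huv : Γ.Reachable u v) (hne : u ≠ v) {p q : W} (hp : p ∈ r u) (hq : q ∈ r v) :
    Δ.dist p q ≤ (2 * A + B) * Γ.dist u v := by
  have one_le_dist : 1 ≤ Γ.dist u v := huv.pos_dist_of_ne hne
  calc
    Δ.dist p q ≤ (A + B) * Γ.dist u v + A := hr.dist_le hΔ huv hp hq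
    _ ≤ (A + B) * Γ.dist u v + A * Γ.dist u v := by
      gcongr; exact Nat.le_mul_of_pos_right A one_le_dist
    _ = (2 * A + B) * Γ.dist u v := by ring

end IsCoarseLipschitz

theorem quasi_retract_quasi_isometric_embedding_general (hΔ : Δ.Connected) (f : Δ →g Γ)
    (hf : Function.Injective f) (hr : IsCoarseLipschitz Γ Δ A B r) (hmem : ∀ y, y ∈ r (f y))
    (y y' : W) :
    Γ.dist (f y) (f y') ≤ Δ.dist y y' ∧ Δ.dist y y' ≤ (2 * A + B) * Γ.dist (f y) (f y') := by
  have hreach : Δ.Reachable y y' := hΔ y y'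
  refine ⟨dist_hom_apply_le f hreach, ?_⟩
  obtain rfl | hne := eq_or_ne y y'
  · simp
  · exact hr.dist_le_mul_dist hΔ (hreach.map f) (hf.ne hne) (hmem y) (hmem y')

end

/-- Graph form of Lemma 5.2: an `(A,B)`-quasi-retract of a connected graph `Γ` onto a
subset `Y` (with connected induced subgraph) makes the inclusion of `Γ[Y]` into `Γ` a
quasi-isometric embedding with multiplicative constant `2A + B`. -/
theorem quasi_retract_quasi_isometric_embedding {X : Type*} (Γ : SimpleGraph X)
    (hconn : Γ.Connected) (Y : Set X) (hYconn : (Γ.induce Y).Connected)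
    (A B : ℕ) (r : X → Set Y)
    (hne : ∀ x : X, (r x).Nonempty)
    (hdiam : ∀ x : X, ∀ p ∈ r x, ∀ q ∈ r x, (Γ.induce Y).dist p q ≤ A)
    (hlip : ∀ x x' : X, (x = x' ∨ Γ.Adj x x') →
      ∃ p ∈ r x, ∃ q ∈ r x', (Γ.induce Y).dist p q ≤ B)
    (hretr : ∀ y : Y, r (y : X) = {y}) :
    ∀ y y' : Y, Γ.dist (y : X) (y' : X) ≤ (Γ.induce Y).dist y y' ∧
      (Γ.induce Y).dist y y' ≤ (2 * A + B) * Γ.dist (y : X) (y' : X) :=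
  quasi_retract_quasi_isometric_embedding_general hYconn (SimpleGraph.Embedding.induce Y).toHom
    Subtype.val_injective ⟨hdiam, fun x x' hadj ↦ hlip x x' (Or.inr hadj)⟩
    fun y ↦ (hretr y).symm ▸ Set.mem_singleton y
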